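/- arXiv:2206.12868 — 2 statements merged into one kernel-verified Lean document; each statement's English description precedes it below -/
import Mathlib

section
/- Let N ≥ 1 and M ≥ 2N−1. Let (x₁, x₂) and (y₁, y₂) be bivariate signals of length N with generating polynomials X₁, X₂ and Y₁, Y₂ respectively. Then the spectral matrices of the two signals coincide at all frequency indices m = 0, …, M−1 if and only if their measurement polynomials coincide, i.e., Xᵢ·X̃ⱼ = Yᵢ·Ỹⱼ in ℂ[z] for all i, j ∈ {1,2}, where the tildes denote conjugate reflection at degree N−1. -/
open Matrix Polynomial

/-- Discrete Fourier transform of a signal `x : Fin N → ℂ` at frequency index `m`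
(with `M` frequencies): `X̂[m] = ∑ₙ x[n]·exp(−2πi·m·n/M)`. -/
noncomputable def dft (N M : ℕ) (x : Fin N → ℂ) (m : ℕ) : ℂ :=
  ∑ n : Fin N, x n * Complex.exp (-(2 * Real.pi * Complex.I) * (m : ℂ) * ((n : ℕ) : ℂ) / (M : ℂ))

/-- The spectral matrix of a bivariate signal at frequency index `m`:
`𝔉[m]_{ij} = X̂ᵢ[m]·conj(X̂ⱼ[m])`. -/
noncomputable def specMat (N M : ℕ) (x : Fin 2 → Fin N → ℂ) (m : ℕ) :
    Matrix (Fin 2) (Fin 2) ℂ :=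
  Matrix.of fun i j => dft N M (x i) m * (starRingEnd ℂ) (dft N M (x j) m)

/-- The generating polynomial of a signal `x : Fin N → ℂ`:
`X(z) = ∑_{n=0}^{N−1} x[n]·zⁿ`. -/
noncomputable def genPoly (N : ℕ) (x : Fin N → ℂ) : Polynomial ℂ :=
  ∑ n : Fin N, Polynomial.C (x n) * Polynomial.X ^ (n : ℕ)

/-- The conjugate reflection of a polynomial `A` at degree `D`:
`Ã(z) = ∑_{n=0}^{D} conj(A.coeff (D−n))·zⁿ`. -/
noncomputable def conjReflect (D : ℕ) (A : Polynomial ℂ) : Polynomial ℂ :=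
  (A.map (starRingEnd ℂ)).reflect D

/-!
On the unit circle conjugation is inversion, so `Ã(z) = z ^ D * conj (A(z))`. Hence the entries of
`𝔉[m]` are, up to the nonzero factor `z ^ (N - 1)`, the values of the measurement polynomials at
the `M`-th roots of unity `z`. These polynomials have degree at most `2 * N - 2 < M`, so the `M`
values determine them.
-/

section ConjReflect

variable {A A' B B' : ℂ[X]} {D E : ℕ} {z : ℂ}

lemma natDegree_conjReflect_le (hA : A.natDegree ≤ D) : (conjReflect D A).natDegree ≤ D :=
  natDegree_reflect_le.trans (max_le le_rfl (natDegree_map_le.trans hA))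

lemma eval_conjReflect (hA : A.natDegree ≤ D) (hz : ‖z‖ = 1) :
    (conjReflect D A).eval z = z ^ D * starRingEnd ℂ (A.eval z) := by
  have mul_conj_self : z * starRingEnd ℂ z = 1 := by simp [Complex.mul_conj', hz]
  let _ : Invertible (starRingEnd ℂ z) := ⟨z, mul_conj_self, by rw [mul_comm, mul_conj_self]⟩
  have eval_mul_conj_pow :
      (conjReflect D A).eval z * starRingEnd ℂ z ^ D = starRingEnd ℂ (A.eval z) := by
    rw [← eval₂_at_apply, ← eval_map]
    exact eval₂_reflect_mul_pow (RingHom.id ℂ) (starRingEnd ℂ z) D _ (natDegree_map_le.trans hA)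
  rw [← eval_mul_conj_pow, mul_left_comm, ← mul_pow, mul_conj_self, one_pow, mul_one]

lemma eval_mul_conjReflect (hB : B.natDegree ≤ D) (hz : ‖z‖ = 1) :
    (A * conjReflect D B).eval z = z ^ D * (A.eval z * starRingEnd ℂ (B.eval z)) := by
  rw [eval_mul, eval_conjReflect hB hz, mul_left_comm]

lemma eval_mul_conjReflect_eq_iff (hB : B.natDegree ≤ D) (hB' : B'.natDegree ≤ D)
    (hz : ‖z‖ = 1) :
    (A * conjReflect D B).eval z = (A' * conjReflect D B').eval z ↔
      A.eval z * starRingEnd ℂ (B.eval z) = A'.eval z * starRingEnd ℂ (B'.eval z) := by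
  have z_ne_zero : z ≠ 0 := norm_ne_zero_iff.mp (by simp [hz])
  rw [eval_mul_conjReflect hB hz, eval_mul_conjReflect hB' hz,
    mul_right_inj' (pow_ne_zero D z_ne_zero)]

theorem mul_conjReflect_eq_iff_forall_eval {ι : Type*} [Fintype ι] {node : ι → ℂ}
    (node_injective : Function.Injective node) (norm_node : ∀ k, ‖node k‖ = 1)
    (hA : A.natDegree ≤ E) (hA' : A'.natDegree ≤ E)
    (hB : B.natDegree ≤ D) (hB' : B'.natDegree ≤ D) (hcard : E + D < Fintype.card ι) :
    A * conjReflect D B = A' * conjReflect D B' ↔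
      ∀ k, A.eval (node k) * starRingEnd ℂ (B.eval (node k)) =
        A'.eval (node k) * starRingEnd ℂ (B'.eval (node k)) := by
  simp only [← eval_mul_conjReflect_eq_iff hB hB' (norm_node _)]
  refine ⟨fun h k ↦ by rw [h], fun h ↦ ?_⟩
  refine eq_of_natDegree_lt_card_of_eval_eq _ _ node_injective h ((max_le ?_ ?_).trans_lt hcard)
  · exact natDegree_mul_le_of_le hA (natDegree_conjReflect_le hB)
  · exact natDegree_mul_le_of_le hA' (natDegree_conjReflect_le hB')

end ConjReflect

section DFT

/-- The primitive `M`-th root of unity `exp(−2πi/M)` whose powers are the points at which the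
discrete Fourier transform with `M` frequencies evaluates the generating polynomial. -/
noncomputable def dftRoot (M : ℕ) : ℂ :=
  Complex.exp (-(2 * Real.pi * Complex.I / M))

variable {N M : ℕ}

lemma isPrimitiveRoot_dftRoot (hM : M ≠ 0) : IsPrimitiveRoot (dftRoot M) M := by
  rw [dftRoot, Complex.exp_neg]
  exact (Complex.isPrimitiveRoot_exp M hM).inv

lemma norm_dftRoot_pow (hM : M ≠ 0) (m : ℕ) : ‖dftRoot M ^ m‖ = 1 := by
  rw [norm_pow, (isPrimitiveRoot_dftRoot hM).norm'_eq_one hM, one_pow]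

lemma dftRoot_pow_injective (hM : M ≠ 0) :
    Function.Injective fun m : Fin M ↦ dftRoot M ^ (m : ℕ) :=
  fun k l h ↦ Fin.ext ((isPrimitiveRoot_dftRoot hM).pow_inj k.isLt l.isLt h)

lemma natDegree_genPoly_le (u : Fin N → ℂ) : (genPoly N u).natDegree ≤ N - 1 :=
  natDegree_sum_le_of_forall_le _ _ fun n _ ↦
    (natDegree_C_mul_X_pow_le _ _).trans (Nat.le_sub_one_of_lt n.isLt)

lemma dft_eq_eval_genPoly (u : Fin N → ℂ) (m : ℕ) :
    dft N M u m = (genPoly N u).eval (dftRoot M ^ m) := by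
  simp only [dft, genPoly, dftRoot, eval_finsetSum, eval_mul, eval_C, eval_pow, eval_X,
    ← Complex.exp_nat_mul]
  refine Finset.sum_congr rfl fun n _ ↦ ?_
  congr 2
  ring

theorem genPoly_mul_conjReflect_eq_iff_forall_dft (hM : 2 * (N - 1) < M)
    (u v u' v' : Fin N → ℂ) :
    genPoly N u * conjReflect (N - 1) (genPoly N v) =
        genPoly N u' * conjReflect (N - 1) (genPoly N v') ↔
      ∀ m : Fin M, dft N M u m * starRingEnd ℂ (dft N M v m) =
        dft N M u' m * starRingEnd ℂ (dft N M v' m) := by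
  have M_ne_zero : M ≠ 0 := Nat.ne_zero_of_lt hM
  simp only [dft_eq_eval_genPoly]
  exact mul_conjReflect_eq_iff_forall_eval (dftRoot_pow_injective M_ne_zero)
    (fun m ↦ norm_dftRoot_pow M_ne_zero m) (natDegree_genPoly_le u) (natDegree_genPoly_le u')
    (natDegree_genPoly_le v) (natDegree_genPoly_le v') (by rwa [Fintype.card_fin, ← two_mul])

lemma specMat_eq_iff (x y : Fin 2 → Fin N → ℂ) (m : ℕ) :
    specMat N M x m = specMat N M y m ↔
      ∀ i j, dft N M (x i) m * starRingEnd ℂ (dft N M (x j) m) =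
        dft N M (y i) m * starRingEnd ℂ (dft N M (y j) m) :=
  Matrix.ext_iff.symm

end DFT

/-- Theorem 1, BPR ⇔ PAF. For `M ≥ 2N−1`, two bivariate signals of
length `N` have the same spectral matrices at all frequency indices `m < M` if and only
if their measurement polynomials coincide: `Xᵢ·X̃ⱼ = Yᵢ·Ỹⱼ` for all `i, j ∈ {1,2}`. -/
theorem specMat_eq_iff_measurement_poly_eq (N M : ℕ) (hN : 1 ≤ N) (hM : 2 * N - 1 ≤ M)
    (x y : Fin 2 → Fin N → ℂ) :
    (∀ m : Fin M, specMat N M x (m : ℕ) = specMat N M y (m : ℕ))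
      ↔ (∀ i j : Fin 2,
          genPoly N (x i) * conjReflect (N - 1) (genPoly N (x j))
            = genPoly N (y i) * conjReflect (N - 1) (genPoly N (y j))) := by
  have two_mul_pred_lt : 2 * (N - 1) < M := by omega
  simp only [specMat_eq_iff, genPoly_mul_conjReflect_eq_iff_forall_dft two_mul_pred_lt]
  exact ⟨fun h i j m ↦ h m i j, fun h m i j ↦ h i j m⟩
end

section
/- Let L ≥ 1 and let A, B ∈ ℂ[z] with natDegree A = natDegree B = L. Let H = gcd(A, B), K = natDegree H, and let F = A/H and G = B/H be the quotient polynomials. Then: (1) the Sylvester subresultant matrix S_K(A, B), of size (2L−K+1) × 2(L−K+1), has rank 2(L−K+1) − 1, so its right kernel has dimension one; (2) for any vectors u, v ∈ ℂ^{L−K+1} such that the stacked vector (u, v) ∈ ℂ^{2(L−K+1)} lies in the right kernel of S_K(A, B), the polynomials U(z) = ∑_k u[k]·z^k and V(z) = ∑_k v[k]·z^k satisfy U = −c·G and V = c·F for some constant c ∈ ℂ. -/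
open Polynomial Matrix

/-- The Sylvester-type matrix `S_D(A, B)` for polynomials of degree at most `L`,
parameterized by `d = L − D` (so that `D = L − d`): it has `L + d + 1 = 2L − D + 1` rows
and `2(d + 1) = 2(L − D + 1)` columns. Columns `0, …, d` hold shifted copies of the
coefficient vector of `A`, columns `d+1, …, 2d+1` hold shifted copies of the coefficient
vector of `B`. -/
noncomputable def sylv (L d : ℕ) (A B : Polynomial ℂ) :
    Matrix (Fin (L + d + 1)) (Fin (2 * (d + 1))) ℂ :=
  Matrix.of fun i j =>
    if (j : ℕ) ≤ d then
      (if (j : ℕ) ≤ (i : ℕ) then A.coeff ((i : ℕ) - (j : ℕ)) else 0)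
    else
      (if (j : ℕ) - (d + 1) ≤ (i : ℕ) then B.coeff ((i : ℕ) - ((j : ℕ) - (d + 1))) else 0)

/-!
Write `A = H F` and `B = H G` with `F`, `G` coprime. A vector `(u, v)` lies in the right kernel of
`S_K(A, B)` exactly when `A U + B V = 0`, that is, when `F U + G V = 0`. If `a F + b G = 1`, then
`Q = a V - b U` satisfies `U = -Q G` and `V = Q F`. Since `U` and `V` have degree at most
`L - K = max (deg F) (deg G)`, the factor `Q` is a constant, so the kernel is the line spanned by
the coefficient vector of `(-G, F)`.
-/

theorem isCoprime_of_eq_gcd_mul {R : Type*} [EuclideanDomain R] [DecidableEq R] {a b x y : R}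
    (hab : EuclideanDomain.gcd a b ≠ 0) (hx : a = EuclideanDomain.gcd a b * x)
    (hy : b = EuclideanDomain.gcd a b * y) : IsCoprime x y := by
  have bezout := EuclideanDomain.gcd_eq_gcd_ab a b
  refine ⟨EuclideanDomain.gcdA a b, EuclideanDomain.gcdB a b, mul_left_cancel₀ hab ?_⟩
  linear_combination
    -bezout - EuclideanDomain.gcdA a b * hx - EuclideanDomain.gcdB a b * hy

theorem mul_add_mul_eq_zero_iff_of_isCoprime {R : Type*} [CommRing R] {x y u v : R}
    (h : IsCoprime x y) : x * u + y * v = 0 ↔ ∃ q, u = -q * y ∧ v = q * x := by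
  refine ⟨fun huv => ?_, ?_⟩
  · obtain ⟨a, b, hab⟩ := h
    refine ⟨a * v - b * u, ?_, ?_⟩
    · linear_combination -u * hab + a * huv
    · linear_combination -v * hab + b * huv
  · rintro ⟨q, rfl, rfl⟩
    ring

theorem max_degree_mul_mul {R : Type*} [Semiring R] [NoZeroDivisors R] (P F G : R[X]) :
    max (P * F).degree (P * G).degree = P.degree + max F.degree G.degree := by
  rw [degree_mul, degree_mul, max_add_add_left]

theorem max_degree_eq_sub_natDegree {R : Type*} [Semiring R] [NoZeroDivisors R] {P F G : R[X]}
    {n : ℕ} (hP : P ≠ 0) (hn : max (P * F).degree (P * G).degree = n) :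
    max F.degree G.degree = (n - P.natDegree : ℕ) := by
  rw [max_degree_mul_mul, degree_eq_natDegree hP] at hn
  have hne : max F.degree G.degree ≠ ⊥ := fun h => by simp [h] at hn
  obtain ⟨d, hd⟩ := WithBot.ne_bot_iff_exists.1 hne
  rw [← hd] at hn ⊢
  exact congrArg _ (Nat.eq_sub_of_add_eq' (WithBot.coe_injective hn))

theorem degree_ofFn_le {R : Type*} [Semiring R] [DecidableEq R] {d : ℕ} (u : Fin (d + 1) → R) :
    (ofFn (d + 1) u).degree ≤ d :=
  degree_le_of_natDegree_le (Nat.le_of_lt_succ (ofFn_natDegree_lt d.succ_pos u))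

theorem ofFn_toFn_of_degree_le {R : Type*} [Semiring R] [DecidableEq R] {d : ℕ} {P : R[X]}
    (hP : P.degree ≤ d) : ofFn (d + 1) (toFn (d + 1) P) = P :=
  ofFn_comp_toFn_eq_id_of_natDegree_lt (Nat.lt_succ_of_le (natDegree_le_of_degree_le hP))

theorem toFn_eq_zero_iff_of_degree_le {R : Type*} [Semiring R] {d : ℕ} {P : R[X]}
    (hP : P.degree ≤ d) : toFn (d + 1) P = 0 ↔ P = 0 := by
  classical
  rw [← (injective_ofFn (d + 1)).eq_iff, ofFn_toFn_of_degree_le hP, map_zero]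

theorem sum_C_mul_X_pow_eq_ofFn {R : Type*} [Semiring R] [DecidableEq R] {n : ℕ} (u : Fin n → R) :
    ∑ k, C (u k) * X ^ (k : ℕ) = ofFn n u := by
  simp only [ofFn_eq_sum_monomial, C_mul_X_pow_eq_monomial]

section MulMatrix

variable {R : Type*} [Semiring R]

/-- The matrix of multiplication by `P`, from the coefficients of degree `< n` to those of
degree `< m`. Coefficients of the product of degree at least `m` are discarded. -/
noncomputable def mulMatrix (P : R[X]) (m n : ℕ) : Matrix (Fin m) (Fin n) R :=
  of fun i j => (P * X ^ (j : ℕ)).coeff i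

theorem mulMatrix_mulVec [DecidableEq R] (P : R[X]) (m : ℕ) {n : ℕ} (u : Fin n → R) :
    mulMatrix P m n *ᵥ u = toFn m (P * ofFn n u) := by
  ext i
  simp only [mulVec, dotProduct, mulMatrix, of_apply, toFn, LinearMap.pi_apply, lcoeff_apply,
    ofFn_eq_sum_monomial, Finset.mul_sum, finsetSum_coeff, ← C_mul_X_pow_eq_monomial,
    ← X_pow_mul_C, ← mul_assoc, coeff_mul_C]

/-- The Sylvester-type matrix `S_{L - d}(A, B)` over any semiring. Its columns are indexed by a
disjoint union, so that the stacked vector `(u, v)` is `Sum.elim u v`. -/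
noncomputable def subresultantMatrix (L d : ℕ) (A B : R[X]) :
    Matrix (Fin (L + d + 1)) (Fin (d + 1) ⊕ Fin (d + 1)) R :=
  fromCols (mulMatrix A _ _) (mulMatrix B _ _)

theorem subresultantMatrix_mulVec_sumElim [DecidableEq R] (L : ℕ) {d : ℕ} (A B : R[X])
    (u v : Fin (d + 1) → R) :
    subresultantMatrix L d A B *ᵥ Sum.elim u v =
      toFn (L + d + 1) (A * ofFn (d + 1) u + B * ofFn (d + 1) v) := by
  rw [subresultantMatrix, fromCols_mulVec_sumElim, mulMatrix_mulVec, mulMatrix_mulVec, map_add]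

theorem subresultantMatrix_mulVec_eq_zero_iff [DecidableEq R] {L d : ℕ} {A B : R[X]}
    (hA : A.degree ≤ L) (hB : B.degree ≤ L) (u v : Fin (d + 1) → R) :
    subresultantMatrix L d A B *ᵥ Sum.elim u v = 0 ↔
      A * ofFn (d + 1) u + B * ofFn (d + 1) v = 0 := by
  rw [subresultantMatrix_mulVec_sumElim, toFn_eq_zero_iff_of_degree_le]
  exact degree_add_le_of_degree_le (degree_mul_le_of_le hA (degree_ofFn_le u))
    (degree_mul_le_of_le hB (degree_ofFn_le v))

end MulMatrix

section Kernel

variable {R : Type*} [CommRing R] [IsDomain R] {L d : ℕ} {H F G : R[X]}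

theorem subresultantMatrix_mul_mulVec_eq_zero_iff [DecidableEq R] (hH : H ≠ 0) (hFG : IsCoprime F G)
    (hd : max F.degree G.degree = d) (hL : max (H * F).degree (H * G).degree ≤ L)
    (u v : Fin (d + 1) → R) :
    subresultantMatrix L d (H * F) (H * G) *ᵥ Sum.elim u v = 0 ↔
      ∃ c, ofFn (d + 1) u = -C c * G ∧ ofFn (d + 1) v = C c * F := by
  rw [subresultantMatrix_mulVec_eq_zero_iff (le_of_max_le_left hL) (le_of_max_le_right hL),
    mul_assoc, mul_assoc, ← mul_add, mul_eq_zero_iff_left hH,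
    mul_add_mul_eq_zero_iff_of_isCoprime hFG]
  refine ⟨?_, fun ⟨c, hu, hv⟩ => ⟨C c, hu, hv⟩⟩
  rintro ⟨Q, hu, hv⟩
  have hQ : Q.degree + d ≤ 0 + d := by
    rw [zero_add, ← hd, ← max_degree_mul_mul, hd, ← hv, ← degree_neg (Q * G), ← neg_mul, ← hu]
    exact max_le (degree_ofFn_le v) (degree_ofFn_le u)
  rw [eq_C_of_degree_le_zero (WithBot.le_of_add_le_add_right (WithBot.natCast_ne_bot d) hQ)]
    at hu hv
  exact ⟨_, hu, hv⟩

theorem ker_subresultantMatrix_mul (hH : H ≠ 0) (hFG : IsCoprime F G)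
    (hd : max F.degree G.degree = d) (hL : max (H * F).degree (H * G).degree ≤ L) :
    LinearMap.ker (subresultantMatrix L d (H * F) (H * G)).mulVecLin =
      Submodule.span R {Sum.elim (toFn (d + 1) (-G)) (toFn (d + 1) F)} := by
  classical
  have hF : ofFn (d + 1) (toFn (d + 1) F) = F := ofFn_toFn_of_degree_le (le_of_max_le_left hd.le)
  have hG : ofFn (d + 1) (toFn (d + 1) (-G)) = -G :=
    ofFn_toFn_of_degree_le ((degree_neg G).trans_le (le_of_max_le_right hd.le))
  ext w
  obtain ⟨u, v, rfl⟩ : ∃ u v, w = Sum.elim u v := ⟨_, _, (Sum.elim_comp_inl_inr w).symm⟩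
  rw [LinearMap.mem_ker, mulVecLin_apply, Submodule.mem_span_singleton,
    subresultantMatrix_mul_mulVec_eq_zero_iff hH hFG hd hL]
  refine exists_congr fun c => ?_
  have smul_elim (a b : Fin (d + 1) → R) : c • Sum.elim a b = Sum.elim (c • a) (c • b) :=
    Sum.comp_elim (c • ·) a b
  rw [smul_elim, Sum.elim_eq_iff, ← (injective_ofFn (d + 1)).eq_iff,
    ← (injective_ofFn (d + 1)).eq_iff, map_smul, map_smul, hF, hG, smul_eq_C_mul, smul_eq_C_mul,
    mul_neg, neg_mul, eq_comm, @eq_comm _ (C c * F)]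

end Kernel

theorem rank_subresultantMatrix_mul {k : Type*} [Field k] {L d : ℕ} {H F G : k[X]} (hH : H ≠ 0)
    (hFG : IsCoprime F G) (hd : max F.degree G.degree = d)
    (hL : max (H * F).degree (H * G).degree ≤ L) :
    (subresultantMatrix L d (H * F) (H * G)).rank = 2 * (d + 1) - 1 := by
  classical
  have hne : Sum.elim (toFn (d + 1) (-G)) (toFn (d + 1) F) ≠ 0 := by
    intro h
    obtain ⟨hG, hF⟩ := Sum.elim_eq_iff.1 (h.trans Sum.elim_zero_zero.symm)
    rw [toFn_eq_zero_iff_of_degree_le ((degree_neg G).trans_le (le_of_max_le_right hd.le)),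
      neg_eq_zero] at hG
    rw [toFn_eq_zero_iff_of_degree_le (le_of_max_le_left hd.le)] at hF
    exact not_isCoprime_zero_zero (hF ▸ hG ▸ hFG)
  have rank_nullity := LinearMap.finrank_range_add_finrank_ker
    (subresultantMatrix L d (H * F) (H * G)).mulVecLin
  rw [ker_subresultantMatrix_mul hH hFG hd hL, finrank_span_singleton hne,
    Module.finrank_fintype_fun_eq_card, Fintype.card_sum, Fintype.card_fin, ← two_mul]
    at rank_nullity
  exact Nat.eq_sub_of_add_eq rank_nullity

theorem sylvester_subresultant_right_kernel_general {k : Type*} [Field k] [DecidableEq k] {L : ℕ}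
    {A B F G : k[X]} (hAB : max A.degree B.degree = L)
    (hF : A = EuclideanDomain.gcd A B * F) (hG : B = EuclideanDomain.gcd A B * G) :
    (subresultantMatrix L (L - (EuclideanDomain.gcd A B).natDegree) A B).rank =
        2 * (L - (EuclideanDomain.gcd A B).natDegree + 1) - 1 ∧
      ∀ u v, subresultantMatrix L (L - (EuclideanDomain.gcd A B).natDegree) A B *ᵥ
          Sum.elim u v = 0 ↔
        ∃ c, ofFn _ u = -C c * G ∧ ofFn _ v = C c * F := by
  have hH : EuclideanDomain.gcd A B ≠ 0 := by
    intro h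
    obtain ⟨rfl, rfl⟩ := EuclideanDomain.gcd_eq_zero_iff.1 h
    simp at hAB
  have hFG : IsCoprime F G := isCoprime_of_eq_gcd_mul hH hF hG
  generalize EuclideanDomain.gcd A B = H at *
  subst hF hG
  have hd := max_degree_eq_sub_natDegree hH hAB
  exact ⟨rank_subresultantMatrix_mul hH hFG hd hAB.le,
    subresultantMatrix_mul_mulVec_eq_zero_iff hH hFG hd hAB.le⟩

/-- The identification of the columns of `sylv L d A B` with those of
`subresultantMatrix L d A B`: the first `d + 1` columns belong to `A`, the others to `B`. -/
def sylvColumnEquiv (d : ℕ) : Fin (2 * (d + 1)) ≃ Fin (d + 1) ⊕ Fin (d + 1) :=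
  (finCongr (two_mul (d + 1))).trans finSumFinEquiv.symm

theorem sylv_eq_submatrix (L d : ℕ) (A B : ℂ[X]) :
    sylv L d A B = (subresultantMatrix L d A B).submatrix id (sylvColumnEquiv d) := by
  ext i j
  obtain ⟨j, rfl⟩ := (sylvColumnEquiv d).symm.surjective j
  rw [submatrix_apply, Equiv.apply_symm_apply]
  rcases j with j | j
  · simp [sylv, subresultantMatrix, mulMatrix, sylvColumnEquiv, coeff_mul_X_pow', j.is_le]
  · simp [sylv, subresultantMatrix, mulMatrix, sylvColumnEquiv, coeff_mul_X_pow',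
      show ¬ (j + (d + 1) : ℕ) ≤ d by omega]

theorem rank_sylv (L d : ℕ) (A B : ℂ[X]) :
    (sylv L d A B).rank = (subresultantMatrix L d A B).rank := by
  rw [sylv_eq_submatrix]
  exact rank_submatrix _ (Equiv.refl _) (sylvColumnEquiv d)

theorem sylv_mulVec_stacked (L d : ℕ) (A B : ℂ[X]) (u v : Fin (d + 1) → ℂ) :
    sylv L d A B *ᵥ (fun j => if h : (j : ℕ) < d + 1 then u ⟨j, h⟩
        else v ⟨j - (d + 1), by have := j.isLt; omega⟩) =
      subresultantMatrix L d A B *ᵥ Sum.elim u v := by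
  rw [sylv_eq_submatrix, submatrix_mulVec_equiv, Function.comp_id]
  congr 1
  ext (j | j)
  · simp [sylvColumnEquiv, j.is_le.not_gt]
  · simp [sylvColumnEquiv, show ¬ (j + (d + 1) : ℕ) ≤ d by omega]

/-- right kernel of the Sylvester subresultant matrix. Let `A, B` be
polynomials of degree exactly `L`, `H = gcd(A,B)`, `K = natDegree H`, and `F = A/H`,
`G = B/H` the quotients. Then the subresultant matrix `S_K(A,B) = sylv L (L−K) A B` has
rank `2(L−K+1) − 1` (one-dimensional right kernel), and any stacked vector `(u, v)` in
its right kernel yields polynomials `U = −c·G` and `V = c·F` for some constant `c`. -/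
theorem sylvester_subresultant_right_kernel (L : ℕ) (hL : 1 ≤ L)
    (A B : Polynomial ℂ) (hdA : A.natDegree = L) (hdB : B.natDegree = L)
    (K : ℕ) (hK : K = (EuclideanDomain.gcd A B).natDegree)
    (F G : Polynomial ℂ)
    (hF : A = EuclideanDomain.gcd A B * F) (hG : B = EuclideanDomain.gcd A B * G) :
    (sylv L (L - K) A B).rank = 2 * (L - K + 1) - 1
    ∧ ∀ u v : Fin (L - K + 1) → ℂ,
        (sylv L (L - K) A B) *ᵥ
          (fun j : Fin (2 * ((L - K) + 1)) =>
            if h : (j : ℕ) < L - K + 1 then u ⟨(j : ℕ), h⟩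
            else v ⟨(j : ℕ) - (L - K + 1), by have := j.isLt; omega⟩) = 0 →
        ∃ c : ℂ,
          (∑ k : Fin (L - K + 1), Polynomial.C (u k) * Polynomial.X ^ (k : ℕ))
              = -(Polynomial.C c) * G
          ∧ (∑ k : Fin (L - K + 1), Polynomial.C (v k) * Polynomial.X ^ (k : ℕ))
              = Polynomial.C c * F := by
  subst hK
  have hAB : max A.degree B.degree = L := by
    rw [(degree_eq_iff_natDegree_eq_of_pos hL).2 hdA, (degree_eq_iff_natDegree_eq_of_pos hL).2 hdB,
      max_self]
  obtain ⟨hrank, hker⟩ := sylvester_subresultant_right_kernel_general hAB hF hG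
  refine ⟨(rank_sylv ..).trans hrank, fun u v huv => ?_⟩
  simp only [sum_C_mul_X_pow_eq_ofFn]
  exact (hker u v).1 (sylv_mulVec_stacked .. ▸ huv)
end
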